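/- There are no nontrivial left degree-lifting factorizations of the identity: there exist no N ≥ 1, nonzero κ₀, κ₁ ∈ ℂ, P₀ ∈ {I, J}, lifting matrices U₀, …, U_{N−1} over ℂ[X] (each with nonzero lifting filter) and diagonal delay matrices Λ₁, …, Λ_{N−1} with χ(Λ_n) = χ(U_n) =: χ_n and strictly alternating update characteristics χ_{n+1} = 1 − χ_n, such that the 2×2 identity matrix over ℂ[X] equals diag(κ₀,κ₁)·U_{N−1}Λ_{N−1}⋯U₁Λ₁U₀·P₀ and every right partial product P_n (0 ≤ n ≤ N−1) is degree-lifting in some column. -/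

import Mathlib

/-!
Only the last step of the cascade matters. Put `c = χ (N-1)`, `Q = P (N-1)`. Since `P N` is the
inverse of a constant diagonal matrix, and the last lifting step leaves row `1 - c` of `Q` alone,
that row has a nonzero constant at position `1 - c` and `0` at position `c`. The
alternation of the update characteristics says that degree-lifting of `Q` in column `j` reads
`deg Q c j < deg Q (1 - c) j`, which forces `j = 1 - c` and `Q c j = 0`. The vanishing off-diagonal
entry of `P N` at `(c, j)` is then the last lifting filter times a nonzero constant, so that filter
is zero.
-/

open Polynomial

/-- A lifting matrix with update characteristic `χ` and lifting filter `u`: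
upper-triangular for `χ = 0`, lower-triangular for `χ = 1`. -/
noncomputable def liftMat (χ : Fin 2) (u : Polynomial ℂ) :
    Matrix (Fin 2) (Fin 2) (Polynomial ℂ) :=
  if χ = 0 then !![1, u; 0, 1] else !![1, 0; u, 1]

/-- A diagonal delay matrix with update characteristic `χ` and delay `m`:
`diag(X^m, 1)` for `χ = 0`, `diag(1, X^m)` for `χ = 1`. -/
noncomputable def delayMat (χ : Fin 2) (m : ℕ) :
    Matrix (Fin 2) (Fin 2) (Polynomial ℂ) :=
  if χ = 0 then Matrix.diagonal ![Polynomial.X ^ m, 1]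
  else Matrix.diagonal ![1, Polynomial.X ^ m]

/-- The scalar core: `x` and `y` are the diagonal and off-diagonal entries of the row untouched by
the last lifting step, `z` and `w` the entries of the updated row in the same columns, and `a` is
the delay. -/
lemma not_degree_lt_of_last_step {a v x y z w : Polynomial ℂ} {κ : ℂ} (hκ : κ ≠ 0) (hv : v ≠ 0)
    (hx : 1 = C κ * x) (hy : y = 0) (hz : a * z + v * x = 0) :
    ¬ z.degree < x.degree ∧ ¬ w.degree < y.degree := by
  have hx0 : x ≠ 0 := by
    rintro rfl
    simp at hx
  have hxd : x.degree = 0 := by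
    have := congrArg degree hx
    rw [degree_mul, degree_C hκ, degree_one, zero_add] at this
    exact this.symm
  refine ⟨fun hlt => ?_, by simp [hy]⟩
  -- A polynomial of degree below `0` vanishes, leaving only the filter term in `hz`.
  have hz0 : z = 0 := by
    by_contra hne
    rw [hxd] at hlt
    exact not_le.mpr hlt (zero_le_degree_iff.mpr hne)
  simp [hz0, hv, hx0] at hz

/-- The final step of a cascade with diagonal constant product cannot start from a matrix that is
degree-lifting in row `1 - c`. -/
lemma last_step_not_degree_lifting (κ₀ κ₁ : ℂ) (hκ₀ : κ₀ ≠ 0) (hκ₁ : κ₁ ≠ 0) (c : Fin 2)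
    (v : Polynomial ℂ) (hv : v ≠ 0) (k : ℕ) (Q : Matrix (Fin 2) (Fin 2) (Polynomial ℂ))
    (h : (1 : Matrix (Fin 2) (Fin 2) (Polynomial ℂ)) =
      Matrix.diagonal ![C κ₀, C κ₁] * (liftMat c v * delayMat c k * Q))
    (j : Fin 2) : ¬ (Q c j).degree < (Q (1 - c) j).degree := by
  have e := fun r s : Fin 2 => congrFun (congrFun h r) s
  have e00 := e 0 0
  have e01 := e 0 1
  have e10 := e 1 0
  have e11 := e 1 1
  fin_cases c <;>
    simp [liftMat, delayMat, Matrix.vecMul, dotProduct, Fin.sum_univ_two, hκ₀, hκ₁]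
      at e00 e01 e10 e11
  · have key := not_degree_lt_of_last_step (w := Q 0 0) hκ₁ hv e11 e10 e01
    fin_cases j
    · exact key.2
    · exact key.1
  · have key := not_degree_lt_of_last_step (w := Q 1 1) hκ₀ hv e00 e01
      ((add_comm _ _).trans e10)
    fin_cases j
    · exact key.1
    · exact key.2

/-- There are no nontrivial left degree-lifting factorizations of the identity:
no standard causal lifting cascade
`diag(κ₀,κ₁)·U_{N−1}Λ_{N−1}⋯U₁Λ₁U₀·P₀` with `N ≥ 1`, nonzero lifting filters,
strictly alternating update characteristics, and `P₀ ∈ {I, J}`, whose right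
partial products `P n` (`0 ≤ n ≤ N−1`) are all degree-lifting in some column
(row index `χ_{n−1}`, with `χ_{−1} := 1 − χ₀`), can equal the identity matrix.
Here the cascade's partial products are encoded by `P : ℕ → Matrix`, with
`Λ₀ := I` via `m 0 = 0`. -/
theorem no_identity_liftings :
    ¬ ∃ (N : ℕ) (_ : 1 ≤ N) (κ₀ κ₁ : ℂ) (_ : κ₀ ≠ 0) (_ : κ₁ ≠ 0)
        (χ : ℕ → Fin 2) (u : ℕ → Polynomial ℂ) (m : ℕ → ℕ)
        (P₀ : Matrix (Fin 2) (Fin 2) (Polynomial ℂ))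
        (P : ℕ → Matrix (Fin 2) (Fin 2) (Polynomial ℂ)),
      (P₀ = 1 ∨ P₀ = !![0, 1; 1, 0]) ∧
      (∀ n < N, u n ≠ 0) ∧
      (∀ n, n + 1 < N → χ (n + 1) = 1 - χ n) ∧
      m 0 = 0 ∧
      P 0 = P₀ ∧
      (∀ n < N, P (n + 1) = liftMat (χ n) (u n) * delayMat (χ n) (m n) * P n) ∧
      (1 : Matrix (Fin 2) (Fin 2) (Polynomial ℂ)) =
        Matrix.diagonal ![C κ₀, C κ₁] * P N ∧
      (∀ n < N,
        (∀ r : Fin 2, IsCoprime (P n r 0) (P n r 1)) ∧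
        ∃ j : Fin 2,
          (P n (1 - (if n = 0 then 1 - χ 0 else χ (n - 1))) j).degree <
            (P n (if n = 0 then 1 - χ 0 else χ (n - 1)) j).degree) := by
  rintro ⟨N, hN, κ₀, κ₁, hκ₀, hκ₁, χ, u, m, P₀, P, -, hu, hχ, -, -, hP, h1, hdl⟩
  obtain ⟨n, rfl⟩ : ∃ n, N = n + 1 := ⟨N - 1, by omega⟩
  obtain ⟨-, j, hj⟩ := hdl n n.lt_succ_self
  rw [hP n n.lt_succ_self] at h1
  have hrow : (if n = 0 then 1 - χ 0 else χ (n - 1)) = 1 - χ n := by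
    rcases n with _ | k
    · simp
    · simp [hχ k (by omega)]
  rw [hrow, sub_sub_cancel] at hj
  exact last_step_not_degree_lifting κ₀ κ₁ hκ₀ hκ₁ (χ n) (u n) (hu n n.lt_succ_self) (m n) (P n)
    h1 j hj
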